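/- arXiv:2302.02493 — 3 statements merged into one kernel-verified Lean document; each statement's English description precedes it below -/
import Mathlib

section
/- Let Q be a p×p real symmetric positive semidefinite matrix, R a t×t real symmetric positive semidefinite matrix, and ω a t×p real matrix such that the matrix P := Q + ωᵀRω is positive definite. Suppose ε : ℕ → ℝᵖ and V : ℕ → ℝ satisfy V k ≥ 0 for all k and the Bellman recursion V k = (1/2)·(ε k)ᵀ P (ε k) + V (k+1) for all k. Then the sequence k ↦ ‖ε k‖² is summable and ε k → 0 as k → ∞. -/
open Matrix Filter

theorem posDef_coercive (p : ℕ) (P : Matrix (Fin p) (Fin p) ℝ) (hP : P.PosDef) :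
    ∃ c : ℝ, 0 < c ∧ ∀ x : Fin p → ℝ, c * ‖x‖ ^ 2 ≤ x ⬝ᵥ P.mulVec x := by
  have hcont : Continuous (fun x : Fin p → ℝ => x ⬝ᵥ P.mulVec x) := by
    unfold dotProduct mulVec dotProduct
    fun_prop
  have hpos : ∀ x : Fin p → ℝ, x ≠ 0 → 0 < x ⬝ᵥ P.mulVec x := by
    intro x hx
    simpa using (posDef_iff_dotProduct_mulVec.mp hP).2 hx
  rcases (Metric.sphere (0 : Fin p → ℝ) 1).eq_empty_or_nonempty with he | hne
  · refine ⟨1, one_pos, fun x => ?_⟩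
    by_cases hx : x = 0
    · simp [hx]
    · exfalso
      have : (‖x‖⁻¹ • x) ∈ Metric.sphere (0 : Fin p → ℝ) 1 := by
        simp [norm_smul, hx]
      rw [he] at this
      exact this
  · obtain ⟨y, hy, hmin⟩ := (isCompact_sphere (0 : Fin p → ℝ) 1).exists_isMinOn hne
      hcont.continuousOn
    have hy0 : y ≠ 0 := by
      rintro rfl
      simp at hy
    refine ⟨_, hpos y hy0, fun x => ?_⟩
    by_cases hx : x = 0
    · simp [hx]
    · have hm : (‖x‖⁻¹ • x) ∈ Metric.sphere (0 : Fin p → ℝ) 1 := by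
        simp [norm_smul, hx]
      have h := hmin hm
      simp only [Set.mem_setOf_eq, mulVec_smul, smul_dotProduct, dotProduct_smul, smul_eq_mul] at h
      have hn : 0 < ‖x‖ := norm_pos_iff.mpr hx
      calc _ ≤ (‖x‖⁻¹ * (‖x‖⁻¹ * (x ⬝ᵥ P.mulVec x))) * ‖x‖ ^ 2 := by gcongr
        _ = _ := by field_simp

/-- core of Lemma 1: if the value function `V` is nonnegative and
satisfies the Bellman recursion `V k = (1/2) εₖᵀ P εₖ + V (k+1)` with
`P = Q + ωᵀ R ω` positive definite, then the squared Euclidean norms `‖εₖ‖² = εₖ ⬝ᵥ εₖ`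
form a summable sequence and `εₖ → 0`. -/
theorem model_following_error_l2_and_tendsto_zero
    (p t : ℕ) (Q : Matrix (Fin p) (Fin p) ℝ) (R : Matrix (Fin t) (Fin t) ℝ)
    (ω : Matrix (Fin t) (Fin p) ℝ)
    (hQsymm : Q.IsSymm) (hQ : Q.PosSemidef)
    (hRsymm : R.IsSymm) (hR : R.PosSemidef)
    (P : Matrix (Fin p) (Fin p) ℝ) (hP : P = Q + ωᵀ * R * ω)
    (hPpd : P.PosDef)
    (ε : ℕ → Fin p → ℝ) (V : ℕ → ℝ)
    (hVnonneg : ∀ k, 0 ≤ V k)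
    (hBellman : ∀ k, V k = (1 / 2) * (ε k ⬝ᵥ P.mulVec (ε k)) + V (k + 1)) :
    Summable (fun k => ε k ⬝ᵥ ε k) ∧ Tendsto ε atTop (nhds 0) := by
  obtain ⟨c, hc, hcoer⟩ := posDef_coercive p P hPpd
  have hsum : ∀ n, ∑ k ∈ Finset.range n, (c / 2) * ‖ε k‖ ^ 2 ≤ V 0 - V n := by
    intro n
    induction n with
    | zero => simp
    | succ n ih =>
      rw [Finset.sum_range_succ]
      have h1 := hBellman n
      have h2 := hcoer (ε n)
      linarith
  have hS : Summable (fun k => (c / 2) * ‖ε k‖ ^ 2) :=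
    summable_of_sum_range_le (c := V 0) (fun k => by positivity)
      (fun n => by have := hsum n; have := hVnonneg n; linarith)
  have hS' : Summable (fun k => ‖ε k‖ ^ 2) :=
    (summable_mul_left_iff (by positivity : c / 2 ≠ 0)).mp hS
  constructor
  · refine Summable.of_nonneg_of_le (fun k => ?_) (fun k => ?_) (hS'.mul_left (p : ℝ))
    · exact Finset.sum_nonneg fun i _ => mul_self_nonneg _
    · calc ε k ⬝ᵥ ε k ≤ ∑ _i : Fin p, ‖ε k‖ ^ 2 := by
            refine Finset.sum_le_sum fun i _ => ?_
            have := norm_le_pi_norm (ε k) i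
            rw [← sq, ← sq_abs, ← Real.norm_eq_abs]
            gcongr
        _ = _ := by simp
  · rw [tendsto_zero_iff_norm_tendsto_zero]
    have h := hS'.tendsto_atTop_zero.sqrt
    simpa using h
end

section
/- Fix q ∈ ℕ and real constants η > 0 and δ with 0 ≤ δ ≤ 2. Let z : ℕ → ℝ^q be a sequence of nonzero vectors and for each k define M_k := I − (δ/(η + ‖z k‖²))·(z k)(z k)ᵀ. Let e : ℕ → ℝ^q satisfy e (k+1) = M_k · (e k) for all k. Then ‖e k‖ ≤ ‖e 0‖ for every k; that is, the weight-error sequence remains bounded by its initial value. -/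
open Matrix

/-- Lemma 2, boundedness of weight errors: for `η > 0`, `0 ≤ δ ≤ 2`,
a sequence of nonzero vectors `z k`, and the error dynamics
`e (k+1) = (I − (δ/(η + ‖z k‖²)) (z k)(z k)ᵀ) e k`, the Euclidean norm of the
weight-error sequence never exceeds its initial value. -/
theorem kaczmarz_error_dynamics_bounded
    (q : ℕ) (η δ : ℝ) (hη : 0 < η) (hδ0 : 0 ≤ δ) (hδ2 : δ ≤ 2)
    (z : ℕ → EuclideanSpace ℝ (Fin q)) (hz : ∀ k, z k ≠ 0)
    (M : ℕ → Matrix (Fin q) (Fin q) ℝ)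
    (hM : ∀ k, M k = 1 - (δ / (η + ‖z k‖ ^ 2)) • Matrix.vecMulVec (z k) (z k))
    (e : ℕ → EuclideanSpace ℝ (Fin q))
    (he : ∀ k, (e (k + 1) : Fin q → ℝ) = (M k).mulVec (e k)) :
    ∀ k, ‖e k‖ ≤ ‖e 0‖ := by
  intro k
  induction k with
  | zero => exact le_rfl
  | succ k ih =>
    refine le_trans ?_ ih
    have hpos : 0 < η + ‖z k‖ ^ 2 := by positivity
    obtain ⟨c, hc⟩ : ∃ c, c = δ / (η + ‖z k‖ ^ 2) := ⟨_, rfl⟩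
    have hc0 : 0 ≤ c := by rw [hc]; positivity
    have hcz : c * ‖z k‖ ^ 2 ≤ 2 := by
      have h1 : c * (η + ‖z k‖ ^ 2) = δ := by rw [hc]; field_simp
      nlinarith [mul_nonneg hc0 hη.le]
    have hs : inner ℝ (e k) (z k) = (z k : Fin q → ℝ) ⬝ᵥ (e k : Fin q → ℝ) := by
      simp [PiLp.inner_apply, dotProduct]
    have hstep : e (k + 1) = e k - (c * inner ℝ (e k) (z k)) • z k := by
      ext i
      have h := congrFun (he k) i
      rw [hM k, ← hc, Matrix.sub_mulVec, Matrix.one_mulVec, Matrix.smul_mulVec,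
        Matrix.vecMulVec_mulVec] at h
      rw [h, hs]
      simp
      ring
    have hn : ‖e (k + 1)‖ ^ 2 ≤ ‖e k‖ ^ 2 := by
      rw [hstep, norm_sub_sq_real, inner_smul_right, norm_smul, mul_pow, Real.norm_eq_abs, sq_abs]
      nlinarith [mul_nonneg (mul_nonneg hc0 (sq_nonneg (inner ℝ (e k) (z k)))) (sub_nonneg.2 hcz)]
    exact (sq_le_sq₀ (norm_nonneg _) (norm_nonneg _)).1 hn
end

section
/- Fix t, n ∈ ℕ, a nonzero vector ε ∈ ℝⁿ, a vector μ_d ∈ ℝᵗ, and a t×n real matrix Ω_prev. Define Ω_star := Ω_prev − (1/‖ε‖²)·(Ω_prev·ε − μ_d)·εᵀ, where (Ω_prev·ε − μ_d)·εᵀ denotes the outer product. Then Ω_star·ε = μ_d, and for every t×n real matrix Ω with Ω·ε = μ_d one has ‖Ω_star − Ω_prev‖_F ≤ ‖Ω − Ω_prev‖_F in the Frobenius norm, with equality if and only if Ω = Ω_star; that is, Ω_star is the unique Frobenius-norm-closest matrix to Ω_prev satisfying the constraint Ω·ε = μ_d. -/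
open Matrix

attribute [local instance] Matrix.frobeniusNormedAddCommGroup

theorem frob_sq_aux {t n : ℕ} (A : Matrix (Fin t) (Fin n) ℝ) :
    ‖A‖ ^ 2 = ∑ i, ∑ j, A i j ^ 2 := by
  rw [Matrix.frobenius_norm_def, ← Real.sqrt_eq_rpow, Real.sq_sqrt]
  · simp
  · positivity

/-- Kaczmarz projection for the actor, Section IV: for `ε ≠ 0`,
`Ω_star = Ω_prev − (1/‖ε‖²)(Ω_prev ε − μ_d) εᵀ` satisfies the constraint
`Ω_star ε = μ_d` and is the unique Frobenius-norm-closest matrix to `Ω_prev` among all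
matrices `Ω` with `Ω ε = μ_d`.  (The norm `‖·‖` on matrices here is the Frobenius norm,
via the local instance above.) -/
theorem actor_kaczmarz_projection_optimal
    (t n : ℕ) (ε : EuclideanSpace ℝ (Fin n)) (hε : ε ≠ 0)
    (μd : Fin t → ℝ) (Ωprev : Matrix (Fin t) (Fin n) ℝ)
    (Ωstar : Matrix (Fin t) (Fin n) ℝ)
    (hstar : Ωstar = Ωprev - (1 / ‖ε‖ ^ 2) • Matrix.vecMulVec (Ωprev.mulVec ε - μd) ε) :
    Ωstar.mulVec ε = μd ∧
      ∀ Ω : Matrix (Fin t) (Fin n) ℝ, Ω.mulVec ε = μd →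
        ‖Ωstar - Ωprev‖ ≤ ‖Ω - Ωprev‖ ∧
          (‖Ωstar - Ωprev‖ = ‖Ω - Ωprev‖ ↔ Ω = Ωstar) := by
  have hn : ‖ε‖ ^ 2 = ∑ j, ε j * ε j := by
    rw [EuclideanSpace.real_norm_sq_eq]
    exact Finset.sum_congr rfl fun j _ => by ring
  have hne : ‖ε‖ ^ 2 ≠ 0 := by simpa using hε
  have hS : ∀ i j, Ωstar i j - Ωprev i j
      = (-(1 / ‖ε‖ ^ 2) * (Ωprev.mulVec ε i - μd i)) * ε j := by
    intro i j
    rw [hstar]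
    simp [Matrix.vecMulVec_apply]
    ring
  have h1 : Ωstar.mulVec ε = μd := by
    ext i
    have h2 : Ωstar.mulVec ε i - Ωprev.mulVec ε i
        = (-(1 / ‖ε‖ ^ 2) * (Ωprev.mulVec ε i - μd i)) * ‖ε‖ ^ 2 := by
      rw [hn, Finset.mul_sum, ← hn]
      simp only [Matrix.mulVec, dotProduct]
      rw [← Finset.sum_sub_distrib]
      refine Finset.sum_congr rfl fun j _ => ?_
      rw [← sub_mul, hS]
      simp only [Matrix.mulVec, dotProduct]
      ring
    have h3 : (-(1 / ‖ε‖ ^ 2) * (Ωprev.mulVec ε i - μd i)) * ‖ε‖ ^ 2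
        = -(Ωprev.mulVec ε i - μd i) := by
      field_simp
    linarith
  refine ⟨h1, fun Ω hΩ => ?_⟩
  have key : ‖Ω - Ωprev‖ ^ 2 = ‖Ω - Ωstar‖ ^ 2 + ‖Ωstar - Ωprev‖ ^ 2 := by
    simp only [frob_sq_aux]
    rw [← Finset.sum_add_distrib]
    refine Finset.sum_congr rfl fun i _ => ?_
    have h0 : ∑ j, (Ω i j - Ωstar i j) * ε j = 0 := by
      have h4 : Ω.mulVec ε i = Ωstar.mulVec ε i := by rw [hΩ, h1]
      simp only [Matrix.mulVec, dotProduct] at h4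
      simp only [sub_mul, Finset.sum_sub_distrib]
      linarith
    have h5 : ∑ j, 2 * (-(1 / ‖ε‖ ^ 2) * (Ωprev.mulVec ε i - μd i))
        * ((Ω i j - Ωstar i j) * ε j) = 0 := by
      rw [← Finset.mul_sum, h0, mul_zero]
    rw [← add_zero (∑ j, (Ω - Ωstar) i j ^ 2 + _), ← h5, ← Finset.sum_add_distrib,
      ← Finset.sum_add_distrib]
    refine Finset.sum_congr rfl fun j _ => ?_
    have h6 := hS i j
    simp only [Matrix.sub_apply]
    linear_combination (2 * (Ω i j - Ωstar i j)) * h6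
  refine ⟨?_, ?_, ?_⟩
  · exact abs_le_of_sq_le_sq' (by nlinarith [sq_nonneg ‖Ω - Ωstar‖]) (norm_nonneg _) |>.2
  · intro h
    rw [h] at key
    have h7 : ‖Ω - Ωstar‖ ^ 2 = 0 := by linarith
    exact sub_eq_zero.mp (norm_eq_zero.mp (pow_eq_zero_iff (two_ne_zero) |>.mp h7))
  · rintro h
    rw [h]
end
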